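/- Let k ≥ 2 and n = 8kN + 1 for a positive integer N. Then there exists a set of mutually orthogonal cyclic 4k-cycle systems of K_n of cardinality at least N/(16k−2) − 1 = (n−1)/(8k(16k−2)) − 1. In particular, if n ≡ 1 (mod 8k), then μ(4k,n) ≥ μ'(4k,n) ≥ (n−1)/(8k(16k−2)) − 1. -/

import Mathlib

/-- The edge set of the closed walk through `f 0, f 1, …, f (ℓ-1), f 0`. -/
def cycleEdges {V : Type*} [DecidableEq V] (ℓ : ℕ) (f : Fin ℓ → V) : Finset (Sym2 V) :=
  Finset.univ.image (fun i : Fin ℓ => s(f i, f ⟨(i.val + 1) % ℓ, Nat.mod_lt _ i.pos⟩))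

/-- `E` is the edge set of an `ℓ`-cycle. -/
def IsCycle {V : Type*} [DecidableEq V] (ℓ : ℕ) (E : Finset (Sym2 V)) : Prop :=
  ∃ f : Fin ℓ → V, Function.Injective f ∧ E = cycleEdges ℓ f

/-- `F` is an `ℓ`-cycle system of the complete graph on `V`: a set of `ℓ`-cycles whose
edge sets partition the edge set of the complete graph. -/
def IsCycleSystem {V : Type*} [DecidableEq V] (ℓ : ℕ) (F : Set (Finset (Sym2 V))) : Prop :=
  (∀ E ∈ F, IsCycle ℓ E) ∧
  F.Pairwise (fun E E' => Disjoint E E') ∧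
  (∀ e : Sym2 V, ¬ e.IsDiag ↔ ∃ E ∈ F, e ∈ E)

/-- Two cycle systems are orthogonal when any two cycles, one from each,
share at most one edge. -/
def Orthog {V : Type*} [DecidableEq V] (F F' : Set (Finset (Sym2 V))) : Prop :=
  ∀ E ∈ F, ∀ E' ∈ F', (E ∩ E').card ≤ 1

/-- Translation of a cycle (given by its edge set) by `g ∈ ZMod n`. -/
def translateCycle {n : ℕ} (g : ZMod n) (E : Finset (Sym2 (ZMod n))) : Finset (Sym2 (ZMod n)) :=
  E.image (Sym2.map (· + g))

/-- A cycle system of the complete graph on `ZMod n` is cyclic if closed under translation. -/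
def IsCyclicSystem {n : ℕ} (F : Set (Finset (Sym2 (ZMod n)))) : Prop :=
  ∀ E ∈ F, ∀ g : ZMod n, translateCycle g E ∈ F

/-- Even-indexed alternating partial sums of `a`. -/
def GG (a : ℕ → ℤ) : ℕ → ℤ
  | 0 => 0
  | m + 1 => GG a m + (a (2 * m) - a (2 * m + 1))

/-- Alternating partial sums of `a`. -/
def PP (a : ℕ → ℤ) (p : ℕ) : ℤ := GG a (p / 2) + if p % 2 = 1 then a (p - 1) else 0

/-- The vertices of the base cycle. -/
def vv (k : ℕ) (a : ℕ → ℤ) (p : ℕ) : ℤ :=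
  if p ≤ 2 * k then PP a p else GG a k - PP a (p - 2 * k) - ((p % 2 : ℕ) : ℤ)

/-- The lower end of an edge of the base cycle. -/
def BB (k : ℕ) (a : ℕ → ℤ) (h c : ℕ) : ℤ :=
  if h = 0 then GG a ((c + 1) / 2) else GG a k - GG a ((c + 1) / 2) - a c - 1

/-- The edge with lower end `u` and difference `d`. -/
def ed (n : ℕ) (u : ZMod n) (d : ℤ) : Sym2 (ZMod n) := s(u, u + (d : ZMod n))

lemma PP_even (a : ℕ → ℤ) (m : ℕ) : PP a (2 * m) = GG a m := by
  simp [PP]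

lemma PP_odd (a : ℕ → ℤ) (m : ℕ) : PP a (2 * m + 1) = GG a m + a (2 * m) := by
  have h1 : (2 * m + 1) / 2 = m := by omega
  have h2 : (2 * m + 1) % 2 = 1 := by omega
  simp [PP, h1, h2]

lemma GG_strictMono {a : ℕ → ℤ} (ha : StrictAnti a) : StrictMono (GG a) := by
  apply strictMono_nat_of_lt_succ
  intro m
  have := ha (show 2 * m < 2 * m + 1 by omega)
  simp only [GG]; linarith

lemma OO_strictAnti {a : ℕ → ℤ} (ha : StrictAnti a) :
    StrictAnti (fun m => GG a m + a (2 * m)) := by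
  apply strictAnti_nat_of_succ_lt
  intro m
  have := ha (show 2 * m + 1 < 2 * (m + 1) by omega)
  simp only [GG]; linarith

lemma GG_bounds {a : ℕ → ℤ} (ha : StrictAnti a) {k m : ℕ} (hm : m ≤ k) :
    0 ≤ GG a m ∧ GG a m ≤ GG a k := by
  constructor
  · have := (GG_strictMono ha).monotone (Nat.zero_le m)
    simpa [GG] using this
  · exact (GG_strictMono ha).monotone hm

lemma OO_bounds {a : ℕ → ℤ} (ha : StrictAnti a) {k m : ℕ} (hm : m < k)
    (hpos : 0 < a (2 * k - 1)) :
    GG a k < GG a m + a (2 * m) ∧ GG a m + a (2 * m) ≤ a 0 := by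
  constructor
  · obtain ⟨j, rfl⟩ : ∃ j, k = j + 1 := ⟨k - 1, by omega⟩
    have h1 := (OO_strictAnti ha).antitone (show m ≤ j by omega)
    have h2 : 2 * (j + 1) - 1 = 2 * j + 1 := by omega
    rw [h2] at hpos
    simp only [GG] at *
    linarith
  · have := (OO_strictAnti ha).antitone (Nat.zero_le m)
    simpa [GG] using this

/-- Classification of the vertices. -/
lemma vv_cases (k : ℕ) (a : ℕ → ℤ) (p : ℕ) (hp : p < 4 * k) :
    (∃ m, m ≤ k ∧ p = 2 * m ∧ vv k a p = GG a m) ∨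
    (∃ m, m < k ∧ p = 2 * m + 1 ∧ vv k a p = GG a m + a (2 * m)) ∨
    (∃ m, 1 ≤ m ∧ m < k ∧ p = 2 * k + 2 * m ∧ vv k a p = GG a k - GG a m) ∨
    (∃ m, m < k ∧ p = 2 * k + (2 * m + 1) ∧
      vv k a p = GG a k - (GG a m + a (2 * m)) - 1) := by
  by_cases h : p ≤ 2 * k
  · rcases Nat.even_or_odd' p with ⟨m, rfl | rfl⟩
    · left; exact ⟨m, by omega, rfl, by rw [vv, if_pos h, PP_even]⟩
    · right; left; exact ⟨m, by omega, rfl, by rw [vv, if_pos h, PP_odd]⟩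
  · obtain ⟨q, rfl⟩ : ∃ q, p = 2 * k + q := ⟨p - 2 * k, by omega⟩
    have h3 : 2 * k + q - 2 * k = q := by omega
    rcases Nat.even_or_odd' q with ⟨m, rfl | rfl⟩
    · right; right; left
      refine ⟨m, by omega, by omega, rfl, ?_⟩
      have h4 : (2 * k + 2 * m) % 2 = 0 := by omega
      rw [vv, if_neg h, h3, PP_even, h4]; simp
    · right; right; right
      refine ⟨m, by omega, rfl, ?_⟩
      have h4 : (2 * k + (2 * m + 1)) % 2 = 1 := by omega
      rw [vv, if_neg h, h3, PP_odd, h4]; simp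

lemma vv_inj_int {k : ℕ} {a : ℕ → ℤ} (ha : StrictAnti a) (hpos : 0 < a (2 * k - 1))
    (hno : ∀ i j, 1 ≤ i → i < k → 1 ≤ j → j < k → GG a i ≠ GG a k - GG a j)
    {p q : ℕ} (hp : p < 4 * k) (hq : q < 4 * k) (h : vv k a p = vv k a q) : p = q := by
  have hg := GG_strictMono ha
  have ho := OO_strictAnti ha
  have key : ∀ i j, i ≤ k → 1 ≤ j → j < k → GG a i ≠ GG a k - GG a j := by
    intro i j hi hj hjk he
    have hj1 : GG a 0 < GG a j := hg (by omega)
    have hj2 : GG a j < GG a k := hg hjk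
    simp only [GG] at hj1
    rcases Nat.eq_zero_or_pos i with rfl | hi0
    · simp only [GG] at he; linarith
    · rcases Nat.lt_or_ge i k with hik | hik
      · exact hno i j hi0 hik hj hjk he
      · have : i = k := by omega
        subst this; linarith
  rcases vv_cases k a p hp with ⟨m, hm, e, hv⟩ | ⟨m, hm, e, hv⟩ | ⟨m, hm1, hm, e, hv⟩ | ⟨m, hm, e, hv⟩ <;>
  rcases vv_cases k a q hq with ⟨l, hl, e', hw⟩ | ⟨l, hl, e', hw⟩ | ⟨l, hl1, hl, e', hw⟩ | ⟨l, hl, e', hw⟩ <;>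
  have b1 := GG_bounds ha (show m ≤ k by omega) <;>
  have b2 := GG_bounds ha (show l ≤ k by omega) <;>
  rw [hv, hw] at h
  · have := hg.injective h; omega
  · have := OO_bounds ha hl hpos; linarith
  · exact absurd h (key m l hm hl1 hl)
  · have := OO_bounds ha hl hpos; linarith
  · have := OO_bounds ha hm hpos; linarith
  · have := ho.injective h; omega
  · have := OO_bounds ha hm hpos; linarith
  · have := OO_bounds ha hm hpos; have := OO_bounds ha hl hpos; linarith
  · exact absurd h.symm (key l m hl hm1 hm)
  · have := OO_bounds ha hl hpos; linarith
  · have := hg.injective (show GG a m = GG a l by linarith); omega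
  · have := OO_bounds ha hl hpos; linarith
  · have := OO_bounds ha hm hpos; linarith
  · have := OO_bounds ha hm hpos; have := OO_bounds ha hl hpos; linarith
  · have := OO_bounds ha hm hpos; linarith
  · have := ho.injective (show GG a m + a (2 * m) = GG a l + a (2 * l) by linarith); omega

lemma vv_bounds {k : ℕ} {a : ℕ → ℤ} (ha : StrictAnti a) (hpos : 0 < a (2 * k - 1))
    {p : ℕ} (hp : p < 4 * k) : GG a k - a 0 - 1 ≤ vv k a p ∧ vv k a p ≤ a 0 := by
  have b0 := OO_bounds ha (show 0 < k by omega) hpos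
  rcases vv_cases k a p hp with ⟨m, hm, e, hv⟩ | ⟨m, hm, e, hv⟩ | ⟨m, hm1, hm, e, hv⟩ | ⟨m, hm, e, hv⟩ <;>
  have b1 := GG_bounds ha (show m ≤ k by omega) <;> rw [hv]
  · constructor <;> linarith
  · have := OO_bounds ha hm hpos; constructor <;> linarith
  · constructor <;> linarith
  · have := OO_bounds ha hm hpos; constructor <;> linarith

lemma int_eq_of_zmod {n : ℕ} {x y : ℤ} (h : (x : ZMod n) = (y : ZMod n)) (h1 : x - y < n)
    (h2 : y - x < n) : x = y := by
  rw [ZMod.intCast_eq_intCast_iff_dvd_sub] at h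
  have := Int.eq_zero_of_abs_lt_dvd h (by rw [abs_lt]; constructor <;> linarith)
  linarith

lemma vv_inj {k H n : ℕ} (hn : n = 2 * H + 1) {a : ℕ → ℤ} (ha : StrictAnti a)
    (hpos : 0 < a (2 * k - 1)) (hH : a 0 + 1 ≤ H)
    (hno : ∀ i j, 1 ≤ i → i < k → 1 ≤ j → j < k → GG a i ≠ GG a k - GG a j)
    {p q : ℕ} (hp : p < 4 * k) (hq : q < 4 * k)
    (h : ((vv k a p : ℤ) : ZMod n) = ((vv k a q : ℤ) : ZMod n)) : p = q := by
  have b1 := vv_bounds ha hpos hp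
  have b2 := vv_bounds ha hpos hq
  have b3 := GG_bounds ha (le_refl k)
  have hn' : (n : ℤ) = 2 * H + 1 := by rw [hn]; push_cast; ring
  exact vv_inj_int ha hpos hno hp hq
    (int_eq_of_zmod h (by linarith) (by linarith))

lemma ed_inj {H n : ℕ} (hn : n = 2 * H + 1) {u u' : ZMod n} {d d' : ℤ}
    (h1 : 1 ≤ d) (h2 : d ≤ H) (h1' : 1 ≤ d') (h2' : d' ≤ H) (h : ed n u d = ed n u' d') :
    u = u' ∧ d = d' := by
  have hn' : (n : ℤ) = 2 * H + 1 := by rw [hn]; push_cast; ring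
  rw [ed, ed, Sym2.eq_iff] at h
  rcases h with ⟨h, h'⟩ | ⟨h, h'⟩
  · subst h
    refine ⟨rfl, int_eq_of_zmod (n := n) (add_left_cancel h') (by linarith) (by linarith)⟩
  · exfalso
    have h0 : ((d + d' : ℤ) : ZMod n) = ((0 : ℤ) : ZMod n) := by
      push_cast
      rw [h] at h'
      have : u' + ((d : ZMod n) + (d' : ZMod n)) = u' + 0 := by
        rw [add_zero, add_comm (d : ZMod n), ← add_assoc, h']
      exact add_left_cancel this
    have := int_eq_of_zmod (n := n) h0 (by linarith) (by linarith)
    linarith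

lemma ed_surj {H n : ℕ} (hn : n = 2 * H + 1) (e : Sym2 (ZMod n)) (he : ¬ e.IsDiag) :
    ∃ u : ZMod n, ∃ d : ℤ, 1 ≤ d ∧ d ≤ H ∧ e = ed n u d := by
  induction e using Sym2.ind with
  | _ x y =>
  rw [Sym2.mk_isDiag_iff] at he
  have : NeZero n := ⟨by omega⟩
  have hv := (y - x).val_lt
  have hc : (((y - x).val : ℕ) : ZMod n) = y - x := ZMod.natCast_zmod_val _
  have h0 : (y - x).val ≠ 0 := by
    rw [Ne, ZMod.val_eq_zero, sub_eq_zero]; exact fun h => he h.symm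
  by_cases h : (y - x).val ≤ H
  · refine ⟨x, ((y - x).val : ℤ), by omega, by omega, ?_⟩
    rw [ed, Int.cast_natCast, hc]; simp
  · refine ⟨y, (n : ℤ) - ((y - x).val : ℤ), by omega, by omega, ?_⟩
    rw [ed]; push_cast; rw [hc]; simp [Sym2.eq_swap]

lemma ed_not_diag {H n : ℕ} (hn : n = 2 * H + 1) {u : ZMod n} {d : ℤ}
    (h1 : 1 ≤ d) (h2 : d ≤ H) : ¬ (ed n u d).IsDiag := by
  rw [ed, Sym2.mk_isDiag_iff]
  intro h
  have h0 : ((d : ℤ) : ZMod n) = ((0 : ℤ) : ZMod n) := by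
    push_cast
    exact (left_eq_add.mp h)
  have := int_eq_of_zmod (n := n) h0 (by omega) (by omega)
  omega

lemma mk_congr {α : Type*} {x x' y y' : α} (h : x = x') (h' : y = y') : s(x, y) = s(x', y') := by
  rw [h, h']

/-- The edges of the base cycle. -/
lemma step_edge (n k : ℕ) (a : ℕ → ℤ) (g : ZMod n) (h c : ℕ) (hh : h < 2) (hc : c < 2 * k) :
    s(((vv k a (2 * k * h + c) : ℤ) : ZMod n) + g,
      ((vv k a ((2 * k * h + c + 1) % (4 * k)) : ℤ) : ZMod n) + g) =
    ed n (((BB k a h c : ℤ) : ZMod n) + g) (a c + h) := by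
  obtain rfl | rfl : h = 0 ∨ h = 1 := by omega
  · have e1 : 2 * k * 0 + c = c := by simp
    have e2 : (c + 1) % (4 * k) = c + 1 := Nat.mod_eq_of_lt (by omega)
    rw [e1, e2, vv, vv, if_pos (by omega), if_pos (by omega)]
    rcases Nat.even_or_odd' c with ⟨m, rfl | rfl⟩
    · have e3 : (2 * m + 1) / 2 = m := by omega
      rw [PP_even, PP_odd, ed, BB, if_pos rfl, e3]
      refine mk_congr ?_ ?_ <;> (push_cast; ring)
    · have e3 : (2 * m + 1 + 1) = 2 * (m + 1) := by omega
      have e4 : 2 * (m + 1) / 2 = m + 1 := by omega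
      rw [e3, PP_even, PP_odd, ed, BB, if_pos rfl, e3, e4, Sym2.eq_swap]
      refine mk_congr ?_ ?_ <;> (simp only [GG]; try (push_cast; ring))
  · have e1 : vv k a (2 * k * 1 + c) = GG a k - PP a c - ((c % 2 : ℕ) : ℤ) := by
      rw [vv]
      split_ifs with hle
      · have : c = 0 := by omega
        subst this
        simp [PP, GG]
      · have : (2 * k * 1 + c) % 2 = c % 2 := by omega
        rw [this]; congr 3; omega
    have e2 : vv k a ((2 * k * 1 + c + 1) % (4 * k)) =
        GG a k - PP a (c + 1) - (((c + 1) % 2 : ℕ) : ℤ) := by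
      by_cases hl : c + 1 = 2 * k
      · have : (2 * k * 1 + c + 1) % (4 * k) = 0 := by
          have : 2 * k * 1 + c + 1 = 4 * k := by omega
          rw [this, Nat.mod_self]
        rw [this, hl, PP_even, vv, if_pos (by omega)]
        simp [PP, GG]
      · rw [Nat.mod_eq_of_lt (by omega), vv, if_neg (by omega)]
        have : (2 * k * 1 + c + 1) % 2 = (c + 1) % 2 := by omega
        rw [this]; congr 3; omega
    rw [e1, e2]
    rcases Nat.even_or_odd' c with ⟨m, rfl | rfl⟩
    · have e3 : (2 * m + 1) / 2 = m := by omega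
      have e4 : (2 * m + 1) % 2 = 1 := by omega
      have e5 : (2 * m) % 2 = 0 := by omega
      rw [PP_even, PP_odd, ed, BB, if_neg one_ne_zero, e3, e4, e5, Sym2.eq_swap]
      refine mk_congr ?_ ?_ <;> (push_cast; ring)
    · have e3 : (2 * m + 1 + 1) = 2 * (m + 1) := by omega
      have e4 : 2 * (m + 1) / 2 = m + 1 := by omega
      have e5 : (2 * m + 1) % 2 = 1 := by omega
      have e6 : (2 * (m + 1)) % 2 = 0 := by omega
      rw [e3, PP_even, PP_odd, ed, BB, if_neg one_ne_zero, e3, e4, e5, e6]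
      simp only [GG]
      refine mk_congr ?_ ?_ <;> (push_cast; ring)

/-- The translates of the base cycle. -/
def cyc (n k : ℕ) (a : ℕ → ℤ) (g : ZMod n) : Finset (Sym2 (ZMod n)) :=
  cycleEdges (4 * k) (fun j : Fin (4 * k) => ((vv k a j : ℤ) : ZMod n) + g)

lemma mem_cyc (n k : ℕ) (a : ℕ → ℤ) (g : ZMod n) (e : Sym2 (ZMod n)) :
    e ∈ cyc n k a g ↔ ∃ h c : ℕ, h < 2 ∧ c < 2 * k ∧
      e = ed n (((BB k a h c : ℤ) : ZMod n) + g) (a c + h) := by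
  simp only [cyc, cycleEdges, Finset.mem_image, Finset.mem_univ, true_and]
  constructor
  · rintro ⟨⟨p, hp⟩, rfl⟩
    have hk : 0 < 2 * k := by omega
    refine ⟨p / (2 * k), p % (2 * k), ?_, Nat.mod_lt _ hk, ?_⟩
    · rw [Nat.div_lt_iff_lt_mul hk]; omega
    · rw [← step_edge n k a g _ _ (by rw [Nat.div_lt_iff_lt_mul hk]; omega) (Nat.mod_lt _ hk),
        Nat.div_add_mod]
  · rintro ⟨h, c, hh, hc, rfl⟩
    have : 2 * k * h + c < 4 * k := by
      obtain rfl | rfl : h = 0 ∨ h = 1 := by omega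
      · omega
      · omega
    exact ⟨⟨2 * k * h + c, this⟩, step_edge n k a g h c hh hc⟩

lemma translate_cyc (n k : ℕ) (a : ℕ → ℤ) (g g' : ZMod n) :
    translateCycle g' (cyc n k a g) = cyc n k a (g + g') := by
  ext e
  simp only [translateCycle, Finset.mem_image, mem_cyc]
  constructor
  · rintro ⟨_, ⟨h, c, hh, hc, rfl⟩, rfl⟩
    refine ⟨h, c, hh, hc, ?_⟩
    simp only [ed, Sym2.map_mk]
    refine mk_congr ?_ ?_ <;> ring
  · rintro ⟨h, c, hh, hc, rfl⟩
    refine ⟨_, ⟨h, c, hh, hc, rfl⟩, ?_⟩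
    simp only [ed, Sym2.map_mk]
    refine mk_congr ?_ ?_ <;> ring

/-- Shift of column `c`. -/
def ss (k c : ℕ) : ℤ := if c = 0 then (k : ℤ) + 1 else -(c : ℤ)

/-- Position inside column `c`. -/
def yy (k N : ℕ) (i t : ℤ) (c : ℕ) : ℤ := (t + i * ss k c) % (N : ℤ)

/-- The differences used in block `t` of system `i`. -/
def aa (k N : ℕ) (i t : ℤ) (c : ℕ) : ℤ :=
  2 * ((N : ℤ) * (2 * (k : ℤ) - 1 - (c : ℤ)) + yy k N i t c) + 1

/-- The `i`-th cycle system. -/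
def Sys (n k N : ℕ) (i : ℤ) : Set (Finset (Sym2 (ZMod n))) :=
  {E | ∃ t : ℤ, 0 ≤ t ∧ t < N ∧ ∃ g : ZMod n, E = cyc n k (aa k N i t) g}

lemma yy_bounds {k N : ℕ} (hN : 0 < N) (i t : ℤ) (c : ℕ) :
    0 ≤ yy k N i t c ∧ yy k N i t c < N := by
  have h : (0 : ℤ) < N := by exact_mod_cast hN
  exact ⟨Int.emod_nonneg _ h.ne', Int.emod_lt_of_pos _ h⟩

lemma aa_anti {k N : ℕ} (hN : 0 < N) (i t : ℤ) : StrictAnti (aa k N i t) := by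
  apply strictAnti_nat_of_succ_lt
  intro c
  have h1 := yy_bounds (k := k) hN i t c
  have h2 := yy_bounds (k := k) hN i t (c + 1)
  simp only [aa]
  push_cast
  nlinarith

lemma aa_bounds {k N : ℕ} (hN : 0 < N) (i t : ℤ) {c : ℕ} (hc : c < 2 * k) :
    1 ≤ aa k N i t c ∧ aa k N i t c + 1 ≤ ((4 * k * N : ℕ) : ℤ) := by
  have h1 := yy_bounds (k := k) hN i t c
  have h3 : (c : ℤ) + 1 ≤ 2 * k := by exact_mod_cast hc
  have h4 : (0 : ℤ) < N := by exact_mod_cast hN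
  have h5 : 0 ≤ (N : ℤ) * (2 * (k : ℤ) - 1 - (c : ℤ)) :=
    mul_nonneg h4.le (by linarith)
  have h6 : (N : ℤ) * (2 * (k : ℤ) - 1 - (c : ℤ)) ≤ N * (2 * k - 1) :=
    mul_le_mul_of_nonneg_left (by linarith) h4.le
  simp only [aa]
  push_cast
  constructor
  · linarith
  · nlinarith

lemma dif_bounds {k N : ℕ} (hN : 0 < N) (i t : ℤ) {h c : ℕ} (hh : h < 2) (hc : c < 2 * k) :
    1 ≤ aa k N i t c + h ∧ aa k N i t c + h ≤ ((4 * k * N : ℕ) : ℤ) := by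
  have := aa_bounds hN i t hc
  omega

lemma aa_eq {k N : ℕ} (hN : 0 < N) {i t i' t' : ℤ} {h h' c c' : ℕ} (hh : h < 2) (hh' : h' < 2)
    (he : aa k N i t c + h = aa k N i' t' c' + h') :
    h = h' ∧ c = c' ∧ yy k N i t c = yy k N i' t' c' := by
  have h1 := yy_bounds (k := k) hN i t c
  have h2 := yy_bounds (k := k) hN i' t' c'
  have h0 : h = h' := by simp only [aa] at he; omega
  subst h0
  have e : (N : ℤ) * ((c' : ℤ) - c) = yy k N i' t' c' - yy k N i t c := by
    simp only [aa] at he; linarith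
  have hd : yy k N i' t' c' - yy k N i t c = 0 :=
    Int.eq_zero_of_abs_lt_dvd (Dvd.intro _ e) (by rw [abs_lt]; constructor <;> linarith)
  rw [hd] at e
  have h4 : (N : ℤ) ≠ 0 := by exact_mod_cast hN.ne'
  have h5 := (mul_eq_zero.mp e).resolve_left h4
  refine ⟨rfl, by omega, by linarith⟩

lemma aa_surj {k N : ℕ} (hN : 0 < N) (i : ℤ) {d : ℤ} (h1 : 1 ≤ d)
    (h2 : d ≤ ((4 * k * N : ℕ) : ℤ)) :
    ∃ t : ℤ, 0 ≤ t ∧ t < N ∧ ∃ h c : ℕ, h < 2 ∧ c < 2 * k ∧ d = aa k N i t c + h := by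
  have hN' : (0 : ℤ) < N := by exact_mod_cast hN
  push_cast at h2
  set x : ℤ := (d - 1) / 2 with hx
  set q : ℤ := x / N with hq
  have hx0 : 0 ≤ x := by omega
  have hq0 : 0 ≤ q := Int.ediv_nonneg hx0 hN'.le
  have hx1 : x < 2 * k * N := by
    have : d ≤ 2 * (2 * k * N) := by linarith
    omega
  have hq1 : q < 2 * k := Int.ediv_lt_of_lt_mul hN' hx1
  have hxq : (N : ℤ) * q + x % N = x := Int.mul_ediv_add_emod x N
  set c : ℕ := (2 * k - 1 - q).toNat with hc
  have hc' : (c : ℤ) = 2 * k - 1 - q := by rw [hc]; exact Int.toNat_of_nonneg (by linarith)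
  refine ⟨(x - i * ss k c) % N, Int.emod_nonneg _ hN'.ne', Int.emod_lt_of_pos _ hN',
    ((d - 1) % 2).toNat, c, by omega, by omega, ?_⟩
  have hy : yy k N i ((x - i * ss k c) % N) c = x % N := by
    rw [yy, Int.emod_add_emod]; congr 1; ring
  rw [aa, hy, hc']
  have : (2 * (k : ℤ) - 1 - (2 * k - 1 - q)) = q := by ring
  rw [this, hxq]
  omega

/-- Alternating partial sums of the shifts. -/
def SS (k m : ℕ) : ℤ := if m = 0 then 0 else (k : ℤ) + 1 + m

lemma yy_mod (k N : ℕ) (i t : ℤ) (c : ℕ) : ∃ z : ℤ, yy k N i t c = t + i * ss k c + N * z := by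
  refine ⟨-((t + i * ss k c) / N), ?_⟩
  have := Int.mul_ediv_add_emod (t + i * ss k c) N
  rw [yy]; linarith

lemma GG_mod (k N : ℕ) (i t : ℤ) (m : ℕ) :
    ∃ z : ℤ, GG (aa k N i t) m = 2 * (i * SS k m + N * z) := by
  induction m with
  | zero => exact ⟨0, by simp [GG, SS]⟩
  | succ m ih =>
    obtain ⟨z, hz⟩ := ih
    obtain ⟨z1, h1⟩ := yy_mod k N i t (2 * m)
    obtain ⟨z2, h2⟩ := yy_mod k N i t (2 * m + 1)
    have hs : SS k (m + 1) = SS k m + (ss k (2 * m) - ss k (2 * m + 1)) := by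
      rcases Nat.eq_zero_or_pos m with rfl | hm
      · simp [SS, ss]
      · have : m ≠ 0 := by omega
        simp [SS, ss, this]; ring
    refine ⟨z + 1 + z1 - z2, ?_⟩
    simp only [GG, aa]
    rw [hz, h1, h2, hs]
    push_cast
    ring

lemma not_small {N : ℕ} {K x y z : ℤ} (hx : x ≠ 0) (hy : y ≠ 0) (hxK : |x| * K < N)
    (hyK : |y| ≤ K) (h : x * y = N * z) : False := by
  have h1 : x * y = 0 := by
    apply Int.eq_zero_of_abs_lt_dvd (Dvd.intro _ h.symm)
    rw [abs_mul]
    exact lt_of_le_of_lt (mul_le_mul_of_nonneg_left hyK (abs_nonneg _)) hxK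
  rcases mul_eq_zero.mp h1 with h | h
  · exact hx h
  · exact hy h

lemma no_clash {k N : ℕ} {i : ℤ} (hi : 1 ≤ i) (hiN : i * (16 * k - 2) < N) (t : ℤ) :
    ∀ p q, 1 ≤ p → p < k → 1 ≤ q → q < k →
      GG (aa k N i t) p ≠ GG (aa k N i t) k - GG (aa k N i t) q := by
  intro p q hp hpk hq hqk he
  obtain ⟨z1, h1⟩ := GG_mod k N i t p
  obtain ⟨z2, h2⟩ := GG_mod k N i t q
  obtain ⟨z3, h3⟩ := GG_mod k N i t k
  rw [h1, h2, h3] at he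
  simp only [SS, show p ≠ 0 by omega, show q ≠ 0 by omega, show k ≠ 0 by omega, if_false] at he
  refine not_small (N := N) (K := 16 * k - 2) (x := i) (y := p + q + 1) (z := z3 - z1 - z2)
    (by omega) (by omega) ?_ ?_ (by linarith)
  · rwa [abs_of_nonneg (by omega)]
  · rw [abs_of_nonneg (by omega)]; omega

lemma sys_is {k N n : ℕ} (hN : 0 < N) (hn : n = 2 * (4 * k * N) + 1) (hk : 2 ≤ k)
    {i : ℤ} (hi : 1 ≤ i) (hiN : i * (16 * k - 2) < N) :
    IsCycleSystem (4 * k) (Sys n k N i) ∧ IsCyclicSystem (Sys n k N i) := by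
  refine ⟨⟨?_, ?_, ?_⟩, ?_⟩
  · rintro E ⟨t, ht0, ht, g, rfl⟩
    refine ⟨_, ?_, rfl⟩
    rintro ⟨p, hp⟩ ⟨q, hq⟩ h
    have h' := add_right_cancel h
    have := vv_inj hn (aa_anti hN i t) (by have := aa_bounds hN i t (show 2 * k - 1 < 2 * k by omega); omega)
      (aa_bounds hN i t (show 0 < 2 * k by omega)).2 (no_clash hi hiN t) hp hq h'
    exact Fin.ext this
  · rintro E ⟨t, ht0, ht, g, rfl⟩ E' ⟨t', ht0', ht', g', rfl⟩ hne
    rw [Finset.disjoint_left]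
    intro e he he'
    rw [mem_cyc] at he he'
    obtain ⟨h, c, hh, hc, rfl⟩ := he
    obtain ⟨h', c', hh', hc', he⟩ := he'
    have b := dif_bounds hN i t hh hc
    have b' := dif_bounds hN i t' hh' hc'
    obtain ⟨hu, hd⟩ := ed_inj hn b.1 b.2 b'.1 b'.2 he
    obtain ⟨rfl, rfl, hy⟩ := aa_eq hN hh hh' hd
    have ht : t = t' := by
      obtain ⟨z, hz⟩ := yy_mod k N i t c
      obtain ⟨z', hz'⟩ := yy_mod k N i t' c
      have h5 : (N : ℤ) * (z' - z) = t - t' := by rw [hz, hz'] at hy; linarith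
      have := Int.eq_zero_of_abs_lt_dvd (Dvd.intro _ h5) (by rw [abs_lt]; constructor <;> linarith)
      linarith
    subst ht
    exact hne (by rw [add_left_cancel hu])
  · intro e
    constructor
    · intro he
      obtain ⟨u, d, h1, h2, rfl⟩ := ed_surj hn e he
      obtain ⟨t, ht0, ht, h, c, hh, hc, rfl⟩ := aa_surj hN i h1 h2
      refine ⟨_, ⟨t, ht0, ht, u - ((BB k (aa k N i t) h c : ℤ) : ZMod n), rfl⟩, ?_⟩
      rw [mem_cyc]
      exact ⟨h, c, hh, hc, by rw [add_sub_cancel]⟩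
    · rintro ⟨E, ⟨t, ht0, ht, g, rfl⟩, he⟩
      rw [mem_cyc] at he
      obtain ⟨h, c, hh, hc, rfl⟩ := he
      have b := dif_bounds hN i t hh hc
      exact ed_not_diag hn b.1 b.2
  · rintro E ⟨t, ht0, ht, g, rfl⟩ g'
    exact ⟨t, ht0, ht, g + g', translate_cyc _ _ _ _ _⟩

/-- The relative position of the two edges of a column determines the system. -/
lemma same_col {k N n : ℕ} (hN : 0 < N) (hn : n = 2 * (4 * k * N) + 1) (hk : 2 ≤ k)
    {i i' : ℤ} (hii : i ≠ i') (hiN : |i - i'| * (16 * k - 2) < N) {t t' : ℤ} {c : ℕ}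
    (hc : c < 2 * k) {g g' : ZMod n} (hy : aa k N i t c = aa k N i' t' c)
    (h0 : ((BB k (aa k N i t) 0 c : ℤ) : ZMod n) + g = ((BB k (aa k N i' t') 0 c : ℤ) : ZMod n) + g')
    (h1 : ((BB k (aa k N i t) 1 c : ℤ) : ZMod n) + g = ((BB k (aa k N i' t') 1 c : ℤ) : ZMod n) + g') :
    False := by
  simp only [BB, if_true, one_ne_zero, if_false] at h0 h1
  have hm : (c + 1) / 2 ≤ k := by omega
  generalize (c + 1) / 2 = m at h0 h1 hm
  have hz : (((GG (aa k N i t) k - 2 * GG (aa k N i t) m : ℤ)) : ZMod n) =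
      ((GG (aa k N i' t') k - 2 * GG (aa k N i' t') m : ℤ) : ZMod n) := by
    rw [hy] at h1
    push_cast at h0 h1 ⊢
    linear_combination h1 - h0
  have b1 := GG_bounds (aa_anti (k := k) hN i t) hm
  have b2 := GG_bounds (aa_anti (k := k) hN i' t') hm
  have hp : 0 < 2 * k := by omega
  have o1 := OO_bounds (aa_anti (k := k) hN i t) (show 0 < k by omega)
    (by have := aa_bounds hN i t (show 2 * k - 1 < 2 * k by omega); omega)
  have o2 := OO_bounds (aa_anti (k := k) hN i' t') (show 0 < k by omega)
    (by have := aa_bounds hN i' t' (show 2 * k - 1 < 2 * k by omega); omega)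
  have a1 := (aa_bounds hN i t hp).2
  have a2 := (aa_bounds hN i' t' hp).2
  have hn' : (n : ℤ) = 2 * ((4 * k * N : ℕ) : ℤ) + 1 := by rw [hn]; push_cast; ring
  have he := int_eq_of_zmod hz (by linarith) (by linarith)
  obtain ⟨z1, e1⟩ := GG_mod k N i t m
  obtain ⟨z2, e2⟩ := GG_mod k N i t k
  obtain ⟨z3, e3⟩ := GG_mod k N i' t' m
  obtain ⟨z4, e4⟩ := GG_mod k N i' t' k
  rw [e1, e2, e3, e4] at he
  refine not_small (N := N) (K := 16 * k - 2) (x := i - i') (y := SS k k - 2 * SS k m)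
    (z := z4 - 2 * z3 - z2 + 2 * z1) (sub_ne_zero.mpr hii) ?_ hiN ?_ (by linarith)
  · simp only [SS]; split_ifs <;> omega
  · simp only [SS]; rw [abs_le]; split_ifs <;> constructor <;> omega

lemma sys_orth {k N n : ℕ} (hN : 0 < N) (hn : n = 2 * (4 * k * N) + 1) (hk : 2 ≤ k)
    {i i' : ℤ} (hii : i ≠ i') (hiN : |i - i'| * (16 * k - 2) < N) :
    Orthog (Sys n k N i) (Sys n k N i') := by
  rintro E ⟨t, ht0, ht, g, rfl⟩ E' ⟨t', ht0', ht', g', rfl⟩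
  rw [Finset.card_le_one]
  have main : ∀ e ∈ cyc n k (aa k N i t) g ∩ cyc n k (aa k N i' t') g', ∃ h c : ℕ,
      h < 2 ∧ c < 2 * k ∧ e = ed n (((BB k (aa k N i t) h c : ℤ) : ZMod n) + g) (aa k N i t c + h) ∧
      aa k N i t c = aa k N i' t' c ∧ yy k N i t c = yy k N i' t' c ∧
      ((BB k (aa k N i t) h c : ℤ) : ZMod n) + g = ((BB k (aa k N i' t') h c : ℤ) : ZMod n) + g' := by
    intro e he
    rw [Finset.mem_inter, mem_cyc, mem_cyc] at he
    obtain ⟨⟨h, c, hh, hc, rfl⟩, ⟨h', c', hh', hc', he⟩⟩ := he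
    have b := dif_bounds hN i t hh hc
    have b' := dif_bounds hN i' t' hh' hc'
    obtain ⟨hu, hd⟩ := ed_inj hn b.1 b.2 b'.1 b'.2 he
    obtain ⟨rfl, rfl, hy⟩ := aa_eq hN hh hh' hd
    exact ⟨h, c, hh, hc, rfl, by linarith, hy, hu⟩
  intro e he e' he'
  obtain ⟨h, c, hh, hc, rfl, ha, hy, hu⟩ := main e he
  obtain ⟨h', c', hh', hc', rfl, ha', hy', hu'⟩ := main e' he'
  by_cases hcc : c = c'
  · subst hcc
    by_cases hhh : h = h'
    · rw [hhh]
    · exfalso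
      obtain ⟨rfl, rfl⟩ | ⟨rfl, rfl⟩ : (h = 0 ∧ h' = 1) ∨ (h = 1 ∧ h' = 0) := by omega
      · exact same_col hN hn hk hii hiN hc ha hu hu'
      · exact same_col hN hn hk hii hiN hc ha hu' hu
  · exfalso
    obtain ⟨z1, e1⟩ := yy_mod k N i t c
    obtain ⟨z2, e2⟩ := yy_mod k N i t c'
    obtain ⟨z3, e3⟩ := yy_mod k N i' t' c
    obtain ⟨z4, e4⟩ := yy_mod k N i' t' c'
    rw [e1, e3] at hy
    rw [e2, e4] at hy'
    refine not_small (N := N) (K := 16 * k - 2) (x := i - i') (y := ss k c - ss k c')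
      (z := z3 - z1 - (z4 - z2)) (sub_ne_zero.mpr hii) ?_ hiN ?_ (by linarith)
    · simp only [ss]; split_ifs <;> omega
    · simp only [ss]; rw [abs_le]; split_ifs <;> constructor <;> omega

lemma sys_ne {k N n : ℕ} (hN : 0 < N) (hn : n = 2 * (4 * k * N) + 1) (hk : 2 ≤ k)
    {i i' : ℤ} (ho : Orthog (Sys n k N i) (Sys n k N i')) : Sys n k N i ≠ Sys n k N i' := by
  intro he
  have hm : cyc n k (aa k N i 0) 0 ∈ Sys n k N i := ⟨0, le_refl _, by exact_mod_cast hN, 0, rfl⟩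
  have h := ho _ hm _ (he ▸ hm)
  rw [Finset.inter_self, Finset.card_le_one] at h
  have hp : 0 < 2 * k := by omega
  have h2 := h _ ((mem_cyc _ _ _ _ _).2 ⟨0, 0, by omega, hp, rfl⟩) _
    ((mem_cyc _ _ _ _ _).2 ⟨1, 0, by omega, hp, rfl⟩)
  have b := dif_bounds hN i 0 (show 0 < 2 by omega) hp
  have b' := dif_bounds hN i 0 (show 1 < 2 by omega) hp
  have := (ed_inj hn b.1 b.2 b'.1 b'.2 h2).2
  simp at this

/-- Theorem: for `k ≥ 2` and `n = 8kN + 1`, there is a set of mutually orthogonal cyclic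
`4k`-cycle systems of `K_n` of cardinality at least `N/(16k-2) - 1 = (n-1)/(8k(16k-2)) - 1`;
in particular `μ(4k,n) ≥ μ'(4k,n) ≥ (n-1)/(8k(16k-2)) - 1`. -/
theorem stmt_8 (k N n : ℕ) (hk : 2 ≤ k) (hN : 0 < N) (hn : n = 8 * k * N + 1) :
    ∃ S : Set (Set (Finset (Sym2 (ZMod n)))),
      (∀ F ∈ S, IsCycleSystem (4 * k) F ∧ IsCyclicSystem F) ∧
      S.Pairwise Orthog ∧
      ((n : ℝ) - 1) / (8 * (k : ℝ) * (16 * (k : ℝ) - 2)) - 1 ≤ S.ncard := by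
  have hn2 : n = 2 * (4 * k * N) + 1 := by rw [hn]; ring
  obtain ⟨K, hK⟩ : ∃ K : ℕ, K + 2 = 16 * k := ⟨16 * k - 2, by omega⟩
  have hKz : (16 * (k : ℤ) - 2) = K := by omega
  have hKr : (16 * (k : ℝ) - 2) = K := by
    have : (K : ℝ) + 2 = 16 * k := by exact_mod_cast hK
    linarith
  have hK0 : 0 < K := by omega
  set M : ℕ := (N - 1) / K with hM
  have hMK : M * K < N := by
    have := Nat.div_mul_le_self (N - 1) K
    rw [← hM] at this
    omega
  have hMK2 : N ≤ M * K + K := by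
    have h1 := Nat.div_add_mod (N - 1) K
    have h2 := Nat.mod_lt (N - 1) hK0
    rw [← hM, mul_comm] at h1
    omega
  have hle : ∀ i : ℤ, i ≤ M → i * (16 * (k : ℤ) - 2) < N := by
    intro i hi
    rw [hKz]
    calc i * (K : ℤ) ≤ M * K := mul_le_mul_of_nonneg_right hi (by omega)
      _ < N := by exact_mod_cast hMK
  have horth : ∀ i ∈ Finset.Icc (1 : ℤ) M, ∀ i' ∈ Finset.Icc (1 : ℤ) M, i ≠ i' →
      Orthog (Sys n k N i) (Sys n k N i') := by
    intro i hi i' hi' hne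
    rw [Finset.mem_Icc] at hi hi'
    exact sys_orth hN hn2 hk hne (hle _ (by rw [abs_le]; omega))
  have hinj : Set.InjOn (Sys n k N) (Finset.Icc (1 : ℤ) M : Finset ℤ) := by
    intro i hi i' hi' he
    by_contra hne
    exact sys_ne hN hn2 hk (horth i hi i' hi' hne) he
  refine ⟨Sys n k N '' (Finset.Icc (1 : ℤ) M : Finset ℤ), ?_, ?_, ?_⟩
  · rintro F ⟨i, hi, rfl⟩
    rw [Finset.mem_coe, Finset.mem_Icc] at hi
    exact sys_is hN hn2 hk hi.1 (hle i hi.2)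
  · rintro F ⟨i, hi, rfl⟩ F' ⟨i', hi', rfl⟩ hne
    exact horth i hi i' hi' (fun h => hne (by rw [h]))
  · rw [Set.InjOn.ncard_image hinj, Set.ncard_coe_finset, Int.card_Icc]
    have hc : ((M : ℤ) + 1 - 1).toNat = M := by rw [add_sub_cancel_right, Int.toNat_natCast]
    have hk0 : (0 : ℝ) < k := by exact_mod_cast (by omega : 0 < k)
    have hK0r : (0 : ℝ) < K := by exact_mod_cast hK0
    have h3 : (N : ℝ) ≤ M * K + K := by exact_mod_cast hMK2
    rw [hc, hKr, hn, sub_le_iff_le_add, div_le_iff₀ (by positivity)]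
    push_cast
    nlinarith
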